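/- Let C be an abelian monoidal category with unit 𝟙 whose tensor product is additive in each variable, let (P,d,μ_P) be a projective resolution of 𝟙, let Δ_P : P ⟶ P⊗P be a morphism of resolutions, and let f : P ⟶ 𝟙 be a degree n cocycle. If ψ_f and ψ'_f are both homotopy liftings of (f, Δ_P), then ψ_f ∼ ψ'_f, i.e. ψ_f − ψ'_f = ∂(s) for some degree (n−2) morphism s : P ⟶ P. -/

import Mathlib

/-!
STATEMENT 7: a homotopy lifting of `(f, Δ_P)` is unique up to homotopy
(first assertion of the paper's Remark 4.10).
-/

open CategoryTheory CategoryTheory.Limits CategoryTheory.MonoidalCategory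

universe v u

attribute [local instance] CategoryTheory.Abelian.hasFiniteBiproducts

variable {C : Type u} [Category.{v} C] [Abelian C] [MonoidalCategory C] [MonoidalPreadditive C]

/-- The degree `i` piece of the tensor product complex `E ⊗ F`:
`(E ⊗ F)_i = ⨁_{j+k=i} E_j ⊗ F_k`. -/
noncomputable abbrev tOb (E F : ℕ → C) (i : ℕ) : C :=
  ⨁ (fun j : Fin (i + 1) => E j.1 ⊗ F (i - j.1))

/-- The differential of the tensor product complex `P ⊗ P`; on the summand
`P_j ⊗ P_k` it is `d ⊗ 1 + (-1)^j (1 ⊗ d)`. -/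
noncomputable def tD (P : ℕ → C) (dP : ∀ i, P (i + 1) ⟶ P i) (i : ℕ) :
    tOb P P (i + 1) ⟶ tOb P P i :=
  biproduct.matrix fun (j : Fin (i + 2)) (k : Fin (i + 1)) =>
    (if h : j.1 = k.1 + 1 then
        eqToHom (show P j.1 ⊗ P (i + 1 - j.1) = P (k.1 + 1) ⊗ P (i - k.1) by
          rw [h, show i + 1 - (k.1 + 1) = i - k.1 by omega]) ≫ (dP k.1 ▷ P (i - k.1))
      else 0) +
    (if h : j.1 = k.1 then
        ((-1 : ℤ) ^ k.1) •
          (eqToHom (show P j.1 ⊗ P (i + 1 - j.1) = P k.1 ⊗ P ((i - k.1) + 1) by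
            rw [h, show i + 1 - k.1 = (i - k.1) + 1 by have := k.2; omega]) ≫
            (P k.1 ◁ dP (i - k.1)))
      else 0)

/-- Contraction of the first tensor factor against a degree `m` morphism `π : E ⟶ 𝟙`
(with single component `π : E_m ⟶ 𝟙`), composed with the left unitor:
this is `(π ⊗ 1_F) : (E ⊗ F)_i ⟶ F_j` for `i = j + m` (no Koszul sign since
`1_F` has degree `0`). -/
noncomputable def cFst (E F : ℕ → C) {m : ℕ} (π : E m ⟶ 𝟙_ C) (i j : ℕ) (h : i = j + m) :
    tOb E F i ⟶ F j :=
  biproduct.π (fun a : Fin (i + 1) => E a.1 ⊗ F (i - a.1)) ⟨m, by omega⟩ ≫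
    (π ▷ F (i - m)) ≫ (λ_ (F (i - m))).hom ≫ eqToHom (congrArg F (show i - m = j by omega))

/-- Contraction of the second tensor factor against a degree `m` morphism `π : F ⟶ 𝟙`
(with single component `π : F_m ⟶ 𝟙`), composed with the right unitor:
this is `(1_E ⊗ π) : (E ⊗ F)_i ⟶ E j` for `i = j + m`, including the Koszul sign
`(-1)^{m·j}` coming from moving `π` past `E_j`. -/
noncomputable def cSnd (E F : ℕ → C) {m : ℕ} (π : F m ⟶ 𝟙_ C) (i j : ℕ) (h : i = j + m) :
    tOb E F i ⟶ E j :=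
  ((-1 : ℤ) ^ (m * j)) •
    (biproduct.π (fun a : Fin (i + 1) => E a.1 ⊗ F (i - a.1)) ⟨j, by omega⟩ ≫
      (E j ◁ (eqToHom (congrArg F (show i - j = m by omega)) ≫ π)) ≫ (ρ_ (E j)).hom)

/-- The augmentation `(μ ⊗ μ) : (P ⊗ P)_0 = P_0 ⊗ P_0 ⟶ 𝟙 ⊗ 𝟙 ≅ 𝟙`. -/
noncomputable def tAug (P : ℕ → C) (μ : P 0 ⟶ 𝟙_ C) : tOb P P 0 ⟶ 𝟙_ C :=
  biproduct.π (fun a : Fin 1 => P a.1 ⊗ P (0 - a.1)) ⟨0, Nat.one_pos⟩ ≫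
    (μ ⊗ₘ μ) ≫ (λ_ (𝟙_ C)).hom

/-- A degree `n` morphism of (ℕ-indexed, bounded below) complexes: a family of
components `E_i ⟶ F_j` for `i = j + n`. -/
abbrev DH (E F : ℕ → C) (n : ℤ) :=
  ∀ i j : ℕ, (i : ℤ) = (j : ℤ) + n → (E i ⟶ F j)

/-- Pointwise subtraction of degree `n` morphisms. -/
instance {E F : ℕ → C} {n : ℤ} : Sub (DH E F n) :=
  ⟨fun f g i j h => f i j h - g i j h⟩

/-- `∂(f) = d_F ∘ f - (-1)^n f ∘ d_E` for a degree `n` morphism `f`. -/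
noncomputable def pdel {E F : ℕ → C} (dE : ∀ i, E (i + 1) ⟶ E i) (dF : ∀ i, F (i + 1) ⟶ F i)
    {n m : ℤ} (hm : m = n + 1) (f : DH E F n) : DH E F m :=
  fun i j h =>
    f i (j + 1) (by push_cast; omega) ≫ dF j -
      (n.negOnePow : ℤ) •
        (match i, h with
          | 0, _ => 0
          | (k + 1), h => dE k ≫ f k j (by push_cast at h; omega))

/-- The degree `n` morphism `(f ⊗ 1_P - 1_P ⊗ f) ∘ Δ : P ⟶ P` associated to a degree `n`
cochain `f : P_n ⟶ 𝟙` and a diagonal `Δ : P ⟶ P ⊗ P`. -/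
noncomputable def liftRHS (P : ℕ → C) (Δ : ∀ i, P i ⟶ tOb P P i) (n : ℕ) (f : P n ⟶ 𝟙_ C) :
    DH P P (n : ℤ) :=
  fun i j h => Δ i ≫ cFst P P f i j (by omega) - Δ i ≫ cSnd P P f i j (by omega)

/-- The degree `0` morphism `(μ ⊗ 1_P - 1_P ⊗ μ) ∘ Δ : P ⟶ P`. -/
noncomputable def counitRHS (P : ℕ → C) (μ : P 0 ⟶ 𝟙_ C) (Δ : ∀ i, P i ⟶ tOb P P i) :
    DH P P (0 : ℤ) :=
  fun i j h => Δ i ≫ cFst P P μ i j (by omega) - Δ i ≫ cSnd P P μ i j (by omega)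

/-- Two degree `k` morphisms `u, v : P ⟶ 𝟙` (identified with their single possibly
nonzero components `P_k ⟶ 𝟙`) are homotopic iff `u - v = ∂(s)` for a degree `k-1`
morphism `s : P ⟶ 𝟙`; unravelled, `u - v = (-1)^k (s ∘ d_{k-1})`. -/
def homotopicToUnit (P : ℕ → C) (dP : ∀ i, P (i + 1) ⟶ P i) (k : ℕ)
    (u v : P k ⟶ 𝟙_ C) : Prop :=
  if hk : k = 0 then u = v
  else ∃ s : P (k - 1) ⟶ 𝟙_ C,
    u - v = ((-1 : ℤ) ^ k) •
      (eqToHom (congrArg P (show k = (k - 1) + 1 by omega)) ≫ dP (k - 1) ≫ s)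

/-- `ψf` is a homotopy lifting of `(f, Δ)`:  `∂(ψ_f) = (f ⊗ 1_P - 1_P ⊗ f)Δ` and
`μ ∘ ψ_f ∼ (-1)^{n+1} f ∘ ψ` for some degree `-1` morphism `ψ : P ⟶ P` with
`∂(ψ) = (μ ⊗ 1_P - 1_P ⊗ μ)Δ`. -/
def IsHomotopyLifting (P : ℕ → C) (dP : ∀ i, P (i + 1) ⟶ P i) (μ : P 0 ⟶ 𝟙_ C)
    (Δ : ∀ i, P i ⟶ tOb P P i) (n : ℕ) (hn : 1 ≤ n) (f : P n ⟶ 𝟙_ C)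
    (ψf : DH P P ((n : ℤ) - 1)) : Prop :=
  pdel dP dP (show (n : ℤ) = ((n : ℤ) - 1) + 1 by ring) ψf = liftRHS P Δ n f ∧
  ∃ ψ : DH P P (-1 : ℤ),
    pdel dP dP (show (0 : ℤ) = (-1 : ℤ) + 1 by ring) ψ = counitRHS P μ Δ ∧
    homotopicToUnit P dP (n - 1)
      (ψf (n - 1) 0 (by omega) ≫ μ)
      (((-1 : ℤ) ^ (n + 1)) • (ψ (n - 1) n (by omega) ≫ f))

/-- A morphism out of a projective object lifts along an exact pair. -/
lemma exists_lift_of_image_eq_kernel {D : Type*} [Category D] [Abelian D] {X Y Z Q : D}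
    [Projective Q] (a : X ⟶ Y) (b : Y ⟶ Z)
    (hab : imageSubobject a = kernelSubobject b) (r : Q ⟶ Y) (hr : r ≫ b = 0) :
    ∃ s : Q ⟶ X, s ≫ a = r := by
  have hfac : (imageSubobject a).Factors r := hab ▸ kernelSubobject_factors b r hr
  refine ⟨Projective.factorThru ((imageSubobject a).factorThru r hfac)
    (factorThruImageSubobject a), ?_⟩
  conv_lhs => enter [2]; rw [← imageSubobject_arrow_comp a]
  rw [Projective.factorThru_comp_assoc, Subobject.factorThru_arrow]

/-- Dependent choice along `ℕ` for a family of types. -/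
lemma exists_seq_of_rel {S : ℕ → Type*} {Good : ∀ i, S i → Prop}
    {R : ∀ i, S i → S (i + 1) → Prop} (x : S 0) (hx : Good 0 x)
    (hstep : ∀ i (s : S i), Good i s → ∃ s', Good (i + 1) s' ∧ R i s s') :
    ∃ s : ∀ i, S i, s 0 = x ∧ ∀ i, R i (s i) (s (i + 1)) := by
  choose next hnext hR using hstep
  let seq : ∀ i, {s : S i // Good i s} := fun i =>
    Nat.rec ⟨x, hx⟩ (fun i s => ⟨next i s.1 s.2, hnext i s.1 s.2⟩) i
  exact ⟨fun i => (seq i).1, rfl, fun i => hR i (seq i).1 (seq i).2⟩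

/-- The difference of two degree `m` morphisms with the same boundary is a chain map. -/
lemma pdel_sub_eq_zero {D : Type*} [Category D] [Abelian D] {P : ℕ → D}
    {dP : ∀ i, P (i + 1) ⟶ P i} {m q : ℤ} (hq : q = m + 1) {g g' : DH P P m}
    (h : pdel dP dP hq g = pdel dP dP hq g') :
    pdel dP dP hq (g - g') = fun _ _ _ => 0 := by
  have hsub : ∀ i j hij, (g - g') i j hij = g i j hij - g' i j hij := fun _ _ _ => rfl
  funext i j hij
  have hij' := congrFun (congrFun (congrFun h i) j) hij
  rw [← sub_eq_zero] at hij'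
  rw [← hij']
  cases i
  · simp [pdel, hsub]
  · simp only [pdel, hsub, Preadditive.sub_comp, Preadditive.comp_sub, smul_sub]
    abel

section Resolution

variable {D : Type*} [Category D] [Abelian D] {T : D} {P : ℕ → D} {dP : ∀ i, P (i + 1) ⟶ P i}
  {μ : P 0 ⟶ T}

/-- One row of a null-homotopy: lift a family of cycles `r` out of the projective object `Q`
through the differential, prescribing the augmentation of the component landing in `P 0`. -/
lemma exists_row_lift (hepi : Epi μ)
    (hex0 : imageSubobject (dP 0) = kernelSubobject μ)
    (hex : ∀ i, imageSubobject (dP (i + 1)) = kernelSubobject (dP i))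
    {Q : D} [Projective Q] {m p : ℤ} (hm : m = p + 1) (i : ℕ)
    (r : ∀ j : ℕ, (i : ℤ) = j + m → (Q ⟶ P j))
    (hr0 : ∀ h, r 0 h ≫ μ = 0) (hr : ∀ j h, r (j + 1) h ≫ dP j = 0)
    (t : (i : ℤ) = p → (Q ⟶ T)) :
    ∃ s : ∀ j : ℕ, (i : ℤ) = j + p → (Q ⟶ P j),
      (∀ h, s 0 h ≫ μ = t (by simpa using h)) ∧
      ∀ j h, s (j + 1) (by push_cast; omega) ≫ dP j = r j h := by
  have hpos : ∀ (j : ℕ) (h : (i : ℤ) = j + m), ∃ s : Q ⟶ P (j + 1), s ≫ dP j = r j h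
    | 0, h => exists_lift_of_image_eq_kernel _ _ hex0 _ (hr0 h)
    | j + 1, h => exists_lift_of_image_eq_kernel _ _ (hex j) _ (hr j h)
  choose s hs using hpos
  refine ⟨fun
    | 0, h => Projective.factorThru (t (by simpa using h)) μ
    | j + 1, h => s j (by push_cast at h; omega), fun h => ?_, fun j h => hs j h⟩
  exact Projective.factorThru_comp _ _

/-- A chain map `g : P ⟶ P` of arbitrary degree `m` on a projective resolution of `T` is
null-homotopic as soon as its augmentation `μ g` is a coboundary. -/
lemma exists_eq_pdel (hPP : ∀ i, dP (i + 1) ≫ dP i = 0) (hproj : ∀ i, Projective (P i))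
    (hepi : Epi μ) (hex0 : imageSubobject (dP 0) = kernelSubobject μ)
    (hex : ∀ i, imageSubobject (dP (i + 1)) = kernelSubobject (dP i))
    {m p q : ℤ} (hm : m = p + 1) (hq : q = m + 1) (g : DH P P m)
    (hg : pdel dP dP hq g = fun _ _ _ => 0)
    (hg0 : ∀ h, g 0 0 h ≫ μ = 0)
    (t : ∀ k : ℕ, (k : ℤ) = p → (P k ⟶ T))
    (ht : ∀ k h, g (k + 1) 0 h ≫ μ = dP k ≫ t k (by push_cast at h; omega)) :
    ∃ s : DH P P p, g = pdel dP dP hm s := by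
  obtain ⟨ε, hε⟩ : ∃ ε : ℤ, ε = (p.negOnePow : ℤ) := ⟨_, rfl⟩
  have hεε : ε * ε = 1 := by
    rw [hε, ← Units.val_mul, ← Int.negOnePow_add, Int.negOnePow_even _ ⟨p, rfl⟩, Units.val_one]
  have hmε : (m.negOnePow : ℤ) = -ε := by
    rw [hm, Int.negOnePow_succ, Units.val_neg, hε]
  have hcomm0 : ∀ (j : ℕ) h, g 0 (j + 1) h ≫ dP j = 0 := fun j h => by
    have := congrFun (congrFun (congrFun hg 0) j) (by push_cast at h ⊢; omega)
    simpa [pdel] using this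
  have hcomm : ∀ (i j : ℕ) h, g (i + 1) (j + 1) h ≫ dP j =
      -(ε • (dP i ≫ g i j (by push_cast at h; omega))) := fun i j h => by
    have := congrFun (congrFun (congrFun hg (i + 1)) j) (by push_cast at h ⊢; omega)
    simp only [pdel, hmε, neg_smul, sub_neg_eq_add] at this
    exact eq_neg_of_add_eq_zero_left this
  let Row (i : ℕ) := ∀ j : ℕ, (i : ℤ) = j + p → (P i ⟶ P j)
  let res (i : ℕ) (s : Row i) (j : ℕ) (h : ((i + 1 : ℕ) : ℤ) = j + m) : P (i + 1) ⟶ P j :=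
    g (i + 1) j h + ε • (dP i ≫ s j (by push_cast at h; omega))
  let Good (i : ℕ) (s : Row i) : Prop :=
    (∀ h, res i s 0 h ≫ μ = 0) ∧ ∀ j h, res i s (j + 1) h ≫ dP j = 0
  let R (i : ℕ) (s : Row i) (s' : Row (i + 1)) : Prop :=
    ∀ j h, s' (j + 1) (by push_cast at h ⊢; omega) ≫ dP j = res i s j h
  obtain ⟨x, hx0, hx⟩ := exists_row_lift hepi hex0 hex hm 0 (g 0) hg0 hcomm0
    (fun h => -(ε • t 0 h))
  have hgood : Good 0 x := by
    refine ⟨fun h => ?_, fun j h => ?_⟩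
    · simp [res, ht, hx0, smul_smul, hεε]
    · simp [res, hcomm, hx j (by push_cast at h ⊢; omega)]
  obtain ⟨s, hs0, hs⟩ := exists_seq_of_rel (Good := Good) (R := R) x hgood (by
    intro i s hs
    obtain ⟨s', hs'0, hs'⟩ := exists_row_lift hepi hex0 hex hm (i + 1) (res i s) hs.1 hs.2
      (fun h => -(ε • t (i + 1) h))
    refine ⟨s', ⟨fun h => ?_, fun j h => ?_⟩, hs'⟩
    · simp [res, ht, hs'0, smul_smul, hεε]
    · simp [res, hcomm, hs' j (by push_cast at h ⊢; omega), reassoc_of% hPP])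
  refine ⟨s, ?_⟩
  funext i j h
  cases i with
  | zero => simp [pdel, hs0, hx j h]
  | succ i =>
    have := hs i j h
    simp only [pdel, ← hε]
    rw [this]
    simp [res]

end Resolution

theorem stmt7 (P : ℕ → C) (dP : ∀ i, P (i + 1) ⟶ P i)
    -- `(P, dP, μ)` is a projective resolution of `𝟙`
    (hPP : ∀ i, dP (i + 1) ≫ dP i = 0)
    (hproj : ∀ i, Projective (P i))
    (μ : P 0 ⟶ 𝟙_ C) (hμd : dP 0 ≫ μ = 0) (hepi : Epi μ)
    (hex0 : imageSubobject (dP 0) = kernelSubobject μ)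
    (hex : ∀ i, imageSubobject (dP (i + 1)) = kernelSubobject (dP i))
    -- `Δ : P ⟶ P ⊗ P` is a morphism of resolutions
    (Δ : ∀ i, P i ⟶ tOb P P i)
    (hΔd : ∀ i, Δ (i + 1) ≫ tD P dP i = dP i ≫ Δ i)
    (hΔμ : Δ 0 ≫ tAug P μ = μ)
    -- `f` is a degree `n` cocycle
    (n : ℕ) (hn : 1 ≤ n) (f : P n ⟶ 𝟙_ C) (hf : dP n ≫ f = 0)
    -- `ψf` and `ψ'f` are homotopy liftings of `(f, Δ)`
    (ψf ψ'f : DH P P ((n : ℤ) - 1))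
    (h1 : IsHomotopyLifting P dP μ Δ n hn f ψf)
    (h2 : IsHomotopyLifting P dP μ Δ n hn f ψ'f) :
    -- then `ψf ∼ ψ'f`, i.e. `ψf - ψ'f = ∂(s)` for a degree `n - 2` morphism `s`
    ∃ s : DH P P ((n : ℤ) - 2),
      ψf - ψ'f = pdel dP dP (show (n : ℤ) - 1 = ((n : ℤ) - 2) + 1 by ring) s := by
  obtain ⟨hψf, ψ, hψ, hμψ⟩ := h1
  obtain ⟨hψ'f, ψ', hψ', hμψ'⟩ := h2
  obtain ⟨w, hw⟩ := exists_eq_pdel hPP hproj hepi hex0 hex (show (-1 : ℤ) = -2 + 1 by ring) _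
    (ψ - ψ') (pdel_sub_eq_zero _ (hψ.trans hψ'.symm)) (fun h => by simp at h)
    (fun k h => by omega) (fun k h => by push_cast at h; omega)
  have hsub : ∀ i j h, ψ i j h - ψ' i j h = pdel dP dP (show (-1 : ℤ) = -2 + 1 by ring) w i j h :=
    fun i j h => congrFun (congrFun (congrFun hw i) j) h
  obtain ⟨n, rfl⟩ : ∃ k, n = k + 1 := ⟨n - 1, by omega⟩
  have hchain := pdel_sub_eq_zero _ (hψf.trans hψ'f.symm)
  simp only [homotopicToUnit, Nat.add_sub_cancel] at hμψ hμψ'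
  cases n with
  | zero =>
    refine exists_eq_pdel hPP hproj hepi hex0 hex _ _ (ψf - ψ'f) hchain (fun h => ?_)
      (fun k h => by simp at h) (fun k h => by push_cast at h; omega)
    have hd := congrArg (· ≫ f) (hsub 0 1 (by simp))
    simp only [pdel, Preadditive.sub_comp, Category.assoc, hf, comp_zero, smul_zero,
      sub_zero] at hd
    simp only [↓reduceDIte] at hμψ hμψ'
    change (ψf 0 0 _ - ψ'f 0 0 _) ≫ μ = 0
    rw [Preadditive.sub_comp, hμψ, hμψ', ← smul_sub, hd, smul_zero]
  | succ n =>
    simp only [Nat.add_eq_zero_iff, one_ne_zero, and_false, ↓reduceDIte, eqToHom_refl,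
      Category.id_comp] at hμψ hμψ'
    obtain ⟨a : P n ⟶ 𝟙_ C, ha⟩ := hμψ
    change (ψf (n + 1) 0 _ ≫ μ - (-1 : ℤ) ^ (n + 1 + 1 + 1) • (ψ (n + 1) (n + 2) _ ≫ f) :
      P (n + 1) ⟶ 𝟙_ C) = (-1 : ℤ) ^ (n + 1) • (dP n ≫ a) at ha
    obtain ⟨a' : P n ⟶ 𝟙_ C, ha'⟩ := hμψ'
    change (ψ'f (n + 1) 0 _ ≫ μ - (-1 : ℤ) ^ (n + 1 + 1 + 1) • (ψ' (n + 1) (n + 2) _ ≫ f) :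
      P (n + 1) ⟶ 𝟙_ C) = (-1 : ℤ) ^ (n + 1) • (dP n ≫ a') at ha'
    have hd := congrArg (· ≫ f) (hsub (n + 1) (n + 2) (by push_cast; ring))
    simp only [pdel, Preadditive.sub_comp, Category.assoc, hf, comp_zero, zero_sub,
      Preadditive.zsmul_comp] at hd
    obtain ⟨t, ht⟩ : ∃ t : P n ⟶ 𝟙_ C,
        (ψf (n + 1) 0 (by push_cast; ring) - ψ'f (n + 1) 0 (by push_cast; ring)) ≫ μ =
          dP n ≫ t := by
      rw [sub_eq_iff_eq_add] at ha ha'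
      refine ⟨((-1 : ℤ) ^ (n + 1)) • (a - a') + ((-1 : ℤ) ^ (n + 1 + 1 + 1)) •
        -(((-2 : ℤ).negOnePow : ℤ) • (w n (n + 2) (by push_cast; ring) ≫ f)), ?_⟩
      rw [Preadditive.sub_comp, ha, ha', add_sub_add_comm, ← smul_sub, ← smul_sub, hd]
      simp only [Preadditive.comp_add, Preadditive.comp_zsmul, Preadditive.comp_sub,
        Preadditive.comp_neg]
    refine exists_eq_pdel hPP hproj hepi hex0 hex _ _ (ψf - ψ'f) hchain
      (fun h => by push_cast at h; omega)
      (fun k h => eqToHom (congrArg P (by push_cast at h; omega)) ≫ t) (fun k h => ?_)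
    obtain rfl : k = n := by push_cast at h; omega
    simp only [eqToHom_refl, Category.id_comp]
    exact ht
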